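/- arXiv:2602.08173 — 5 statements merged into one kernel-verified Lean document; each statement's English description precedes it below -/
import Mathlib

section
/- With the correlated Rademacher vectors x, x′, x_1,…,x_L, x′_1,…,x′_L and the correlated Gaussian variables U, V_1,…,V_L as in the context (built from the same parameter ρ), for all natural numbers α, α_1, …, α_L one has E[(⟨x,x′⟩/√n)^{2α} · ∏_{ℓ=1}^L (⟨x_ℓ,x′_ℓ⟩/√n)^{2α_ℓ}] ≤ E[U^{2α} · ∏_{ℓ=1}^L V_ℓ^{2α_ℓ}]. -/
/-!
Write `r = ρ²`, `s = √(1 - ρ⁴)`, so that `r² + s² = 1`. Both sides are expectations of one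
polynomial with nonnegative coefficients in variables indexed by `(j, i)` (`j` the overlap, `i` the
coordinate), so it suffices to compare expectations of monomials (`integral_aeval_mono`). Three laws
are compared, each being independent over `i`:

* the products of signs `x(i)x'(i)`, `x_ℓ(i)x'_ℓ(i)`;
* `ε₀(i)`, `r ε₀(i) + s ε_ℓ(i)` with independent uniform signs `ε`;
* `g₀(i)`, `r g₀(i) + s g_ℓ(i)` with independent standard Gaussians `g`.

First against second (`integral_signs_monomial_le`): pulling out the parity of the total degree, a
monomial of the first law contributes `(E z^b)²`, equal to `1` or `r`, for each factor of degree
`b`, while the second contributes `c_b = ((r + s)^b + (r - s)^b) / 2`. Since `r² + s² = 1`, the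
sequence satisfies `c_b ≤ c_{b+2}`, with `c₀ = 1` and `c₁ = r` (`signMoment_bound`).

Second against third (`integral_mixed_rad_le_gaussian`): substituting the linear mixtures keeps the
coefficients nonnegative, so only `E ε^k ≤ E g^k` is needed, which is Bernoulli's inequality for
even `k` and symmetry for odd `k` (`integral_pow_rad_le_gaussian`).

Finally `n^{-1/2} ∑ i, g_j(i)` is again standard Gaussian (`map_sum_div_sqrt_gaussian`), so the third
expectation is the right-hand side.
-/

open MeasureTheory ProbabilityTheory

/-- The Rademacher-type measure on `ℝ` putting mass `p` at `1` and `1-p` at `-1`. -/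
noncomputable def radMeasure (p : ℝ) : Measure ℝ :=
  ENNReal.ofReal p • Measure.dirac 1 + ENNReal.ofReal (1 - p) • Measure.dirac (-1)

/-- Joint law of `(x, x')` (uniform signs) and `(z_1,…,z_L)`, `(z'_1,…,z'_L)`
(independent signs with success probability `(1+ρ)/2` per coordinate). -/
noncomputable def radSpace (n L : ℕ) (ρ : ℝ) :
    Measure (((Fin n → ℝ) × (Fin n → ℝ)) ×
      ((Fin L → Fin n → ℝ) × (Fin L → Fin n → ℝ))) :=
  ((Measure.pi fun _ : Fin n => radMeasure (1 / 2)).prod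
      (Measure.pi fun _ : Fin n => radMeasure (1 / 2))).prod
    ((Measure.pi fun _ : Fin L => Measure.pi fun _ : Fin n => radMeasure ((1 + ρ) / 2)).prod
      (Measure.pi fun _ : Fin L => Measure.pi fun _ : Fin n => radMeasure ((1 + ρ) / 2)))

/-- The `(L+1)`-fold product of standard Gaussian measures; coordinate `0` is `U`
and coordinate `ℓ.succ` is `W_ℓ`. -/
noncomputable def gaussSpace (L : ℕ) : Measure (Fin (L + 1) → ℝ) :=
  Measure.pi fun _ => gaussianReal 0 1

open scoped NNReal

/-! ### Polynomials with nonnegative coefficients -/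

lemma integrable_aeval_of_monomials {J Ω : Type*} [Fintype J] [MeasurableSpace Ω] {μ : Measure Ω}
    {X : Ω → J → ℝ} (hX : ∀ m : J → ℕ, Integrable (fun ω => ∏ j, X ω j ^ m j) μ)
    (P : MvPolynomial J ℝ≥0) : Integrable (fun ω => MvPolynomial.aeval (X ω) P) μ := by
  simp only [MvPolynomial.aeval_eq_eval₂Hom, MvPolynomial.coe_eval₂Hom, MvPolynomial.eval₂_eq']
  exact integrable_finsetSum _ fun d _ => (hX d).const_mul _

/-- Domination of all monomial moments passes to polynomials with nonnegative coefficients. -/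
lemma integral_aeval_mono {J Ω Ω' : Type*} [Fintype J] [MeasurableSpace Ω] [MeasurableSpace Ω']
    {μ : Measure Ω} {ν : Measure Ω'} {X : Ω → J → ℝ} {Y : Ω' → J → ℝ}
    (hX : ∀ m : J → ℕ, Integrable (fun ω => ∏ j, X ω j ^ m j) μ)
    (hY : ∀ m : J → ℕ, Integrable (fun ω => ∏ j, Y ω j ^ m j) ν)
    (h : ∀ m : J → ℕ, ∫ ω, ∏ j, X ω j ^ m j ∂μ ≤ ∫ ω, ∏ j, Y ω j ^ m j ∂ν)
    (P : MvPolynomial J ℝ≥0) :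
    ∫ ω, MvPolynomial.aeval (X ω) P ∂μ ≤ ∫ ω, MvPolynomial.aeval (Y ω) P ∂ν := by
  simp only [MvPolynomial.aeval_eq_eval₂Hom, MvPolynomial.coe_eval₂Hom, MvPolynomial.eval₂_eq']
  rw [integral_finsetSum _ fun (d : J →₀ ℕ) _ => (hX (d : J → ℕ)).const_mul _,
    integral_finsetSum _ fun (d : J →₀ ℕ) _ => (hY (d : J → ℕ)).const_mul _]
  refine Finset.sum_le_sum fun d _ => ?_
  rw [integral_const_mul, integral_const_mul]
  exact mul_le_mul_of_nonneg_left (h d) (NNReal.coe_nonneg _)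

/-! ### One-dimensional moments -/

lemma isProbabilityMeasure_radMeasure {p : ℝ} (h0 : 0 ≤ p) (h1 : p ≤ 1) :
    IsProbabilityMeasure (radMeasure p) := by
  constructor
  simp [radMeasure, ← ENNReal.ofReal_add h0 (sub_nonneg.2 h1)]

lemma integrable_radMeasure (p : ℝ) (f : ℝ → ℝ) : Integrable f (radMeasure p) := by
  refine Integrable.add_measure ?_ ?_ <;>
    exact (integrable_dirac (by simp)).smul_measure ENNReal.ofReal_ne_top

lemma integral_radMeasure {p : ℝ} (h0 : 0 ≤ p) (h1 : p ≤ 1) (f : ℝ → ℝ) :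
    ∫ x, f x ∂radMeasure p = p * f 1 + (1 - p) * f (-1) := by
  have h (c x) : Integrable f (ENNReal.ofReal c • Measure.dirac x) :=
    (integrable_dirac (by simp)).smul_measure ENNReal.ofReal_ne_top
  rw [radMeasure, integral_add_measure (h _ _) (h _ _)]
  simp [ENNReal.toReal_ofReal, h0, h1]

lemma integrable_pow_gaussianReal (k : ℕ) :
    Integrable (fun x : ℝ => x ^ k) (gaussianReal 0 1) := by
  have h := memLp_id_gaussianReal (μ := 0) (v := 1) (k : ℝ≥0)
  rcases Nat.eq_zero_or_pos k with rfl | hk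
  · simp
  · have := (MemLp.integrable_norm_pow (p := k) (by simpa using h) hk.ne')
    refine this.mono (by fun_prop) (by simp)

lemma integral_pow_rad_le_gaussian (k : ℕ) :
    ∫ x, x ^ k ∂radMeasure (1 / 2) ≤ ∫ x, x ^ k ∂gaussianReal 0 1 := by
  rw [integral_radMeasure (by norm_num) (by norm_num)]
  rcases Nat.even_or_odd' k with ⟨m, rfl | rfl⟩
  · have hsq : ∫ x : ℝ, x ^ 2 ∂gaussianReal 0 1 = 1 := by
      have h := variance_fun_id_gaussianReal (μ := 0) (v := 1)
      rw [variance_of_integral_eq_zero (by fun_prop) (by simp)] at h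
      simpa using h
    -- Bernoulli: `x ^ (2m) ≥ 1 + m (x² - 1)`, and the right-hand side has Gaussian mean `1`.
    have hint : Integrable (fun x : ℝ => 1 + (m : ℝ) * (x ^ 2 - 1)) (gaussianReal 0 1) := by
      have := integrable_pow_gaussianReal 2
      fun_prop
    calc _ = (1 : ℝ) := by norm_num
      _ = ∫ x : ℝ, 1 + (m : ℝ) * (x ^ 2 - 1) ∂gaussianReal 0 1 := by
        have := integrable_pow_gaussianReal 2
        rw [integral_add (by fun_prop) (by fun_prop), integral_const_mul,
          integral_sub this (by fun_prop), hsq]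
        simp
      _ ≤ _ := by
        refine integral_mono hint (integrable_pow_gaussianReal _) fun x => ?_
        have := one_add_mul_le_pow (a := x ^ 2 - 1) (by nlinarith [sq_nonneg x]) m
        simpa [pow_mul] using this
  · have hodd : Odd (2 * m + 1) := odd_two_mul_add_one m
    have h : ∫ x : ℝ, x ^ (2 * m + 1) ∂gaussianReal 0 1
        = -∫ x : ℝ, x ^ (2 * m + 1) ∂gaussianReal 0 1 := by
      conv_lhs => rw [← neg_zero, ← gaussianReal_map_neg,
        integral_map (by fun_prop) (by fun_prop)]
      simp_rw [hodd.neg_pow, integral_neg]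
    rw [show ∫ x : ℝ, x ^ (2 * m + 1) ∂gaussianReal 0 1 = 0 by linarith]
    rw [hodd.neg_pow]
    norm_num

lemma map_sum_div_sqrt_gaussian {n : ℕ} (hn : 1 ≤ n) :
    (Measure.pi fun _ : Fin n => gaussianReal 0 1).map (fun x => (∑ i, x i) / √n)
      = gaussianReal 0 1 := by
  have h : (Measure.pi fun _ : Fin n => gaussianReal 0 1).map (fun x => ∑ i, x i)
      = gaussianReal 0 n := by
    apply Measure.ext_of_charFun
    ext t
    rw [charFun_map_sum_pi_eq_prod]
    simp [charFun_gaussianReal, ← Complex.exp_nat_mul]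
    ring_nf
  have h2 := gaussianReal_map_div_const (μ := 0) (v := n) (√n)
  rw [← h, Measure.map_map (by fun_prop) (by fun_prop)] at h2
  convert h2 using 2
  · rfl
  · simp
  · have hn' : (n : ℝ) ≠ 0 := by positivity
    rw [← NNReal.coe_inj]
    simp [hn']

/-- The moment `E (r + s ε) ^ b` of a uniform sign `ε`. -/
noncomputable def signMoment (r s : ℝ) (b : ℕ) : ℝ := ((r + s) ^ b + (r - s) ^ b) / 2

/-- The left-hand side is `(E z ^ b)²` for a sign `z` with mean `ρ`, written as
`integral_radMeasure` produces it. -/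
lemma signMoment_bound {ρ s : ℝ} (hs : 0 ≤ s) (h : (ρ ^ 2) ^ 2 + s ^ 2 = 1) (b : ℕ) :
    ((1 + ρ) / 2 * 1 ^ b + (1 - (1 + ρ) / 2) * (-1) ^ b) ^ 2 ≤ signMoment (ρ ^ 2) s b := by
  set r := ρ ^ 2 with hr
  have hr0 : 0 ≤ r := by positivity
  have hpos : ∀ b : ℕ, 0 ≤ (r + s) ^ b + (r - s) ^ b ∧ 0 ≤ (r + s) ^ b - (r - s) ^ b := by
    intro b
    induction b with
    | zero => norm_num
    | succ b ih =>
      have h1 := mul_nonneg hr0 ih.1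
      have h2 := mul_nonneg hr0 ih.2
      have h3 := mul_nonneg hs ih.1
      have h4 := mul_nonneg hs ih.2
      constructor <;> (ring_nf at *; linarith)
  -- `(r ± s)² = 1 ± 2rs`, and the odd part `(r + s)^b - (r - s)^b` is nonnegative.
  have hstep : ∀ b, signMoment r s b ≤ signMoment r s (b + 2) := by
    intro b
    have e1 : (r + s) ^ (b + 2) = (r + s) ^ b * (1 + 2 * r * s) := by
      rw [pow_add, ← h]; ring
    have e2 : (r - s) ^ (b + 2) = (r - s) ^ b * (1 - 2 * r * s) := by
      rw [pow_add, ← h]; ring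
    have := mul_nonneg (mul_nonneg hr0 hs) (hpos b).2
    rw [signMoment, signMoment, e1, e2]
    nlinarith
  induction b using Nat.twoStepInduction with
  | zero => norm_num [signMoment]
  | one => simp only [signMoment, hr]; ring_nf; rfl
  | more b ih _ =>
    refine le_trans (le_of_eq ?_) (ih.trans (hstep b))
    simp [pow_add]

/-! ### Mixtures of independent variables -/

/-- The law of an array `G j i` of independent variables with common law `ν`. -/
noncomputable def flatSpace (n L : ℕ) (ν : Measure ℝ) : Measure (Fin (L + 1) → Fin n → ℝ) :=
  Measure.pi fun _ => Measure.pi fun _ => ν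

lemma integrable_flat_monomial {n L : ℕ} {ν : Measure ℝ} [IsProbabilityMeasure ν]
    (hν : ∀ k : ℕ, Integrable (fun x => x ^ k) ν) (m : Fin (L + 1) × Fin n → ℕ) :
    Integrable (fun G : Fin (L + 1) → Fin n → ℝ => ∏ p, Function.uncurry G p ^ m p)
      (flatSpace n L ν) := by
  simp only [Fintype.prod_prod_type, Function.uncurry_apply_pair]
  exact Integrable.fintype_prod (f := fun j (x : Fin n → ℝ) => ∏ i, x i ^ m (j, i)) fun j =>
    Integrable.fintype_prod (f := fun i (x : ℝ) => x ^ m (j, i)) fun i => hν _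

lemma integral_flat_monomial {n L : ℕ} (ν : Measure ℝ) [IsProbabilityMeasure ν]
    (m : Fin (L + 1) × Fin n → ℕ) :
    ∫ G : Fin (L + 1) → Fin n → ℝ, ∏ p, Function.uncurry G p ^ m p ∂flatSpace n L ν
      = ∏ p, ∫ x, x ^ m p ∂ν := by
  simp only [Fintype.prod_prod_type, Function.uncurry_apply_pair, flatSpace]
  rw [integral_fintype_prod_eq_prod (f := fun j (x : Fin n → ℝ) => ∏ i, x i ^ m (j, i))]
  refine Finset.prod_congr rfl fun j _ => ?_
  rw [integral_fintype_prod_eq_prod (f := fun i (x : ℝ) => x ^ m (j, i))]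

/-- The array with row `0` equal to `G 0` and row `ℓ + 1` equal to `r G 0 + s G (ℓ + 1)`, as a function
of the pair of indices. -/
def mixed {n L : ℕ} (r s : ℝ) (G : Fin (L + 1) → Fin n → ℝ) (p : Fin (L + 1) × Fin n) : ℝ :=
  Fin.cases (G 0 p.2) (fun ℓ => r * G 0 p.2 + s * G ℓ.succ p.2) p.1

/-- The linear polynomials whose values at the array `G` are the entries of `mixed r s G`. -/
noncomputable def mixPoly {n L : ℕ} (r s : ℝ≥0) (p : Fin (L + 1) × Fin n) :
    MvPolynomial (Fin (L + 1) × Fin n) ℝ≥0 :=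
  Fin.cases (MvPolynomial.X (0, p.2)) (fun ℓ => MvPolynomial.C r * MvPolynomial.X (0, p.2) +
    MvPolynomial.C s * MvPolynomial.X (ℓ.succ, p.2)) p.1

lemma aeval_mixed {n L : ℕ} (r s : ℝ≥0) (G : Fin (L + 1) → Fin n → ℝ)
    (P : MvPolynomial (Fin (L + 1) × Fin n) ℝ≥0) :
    MvPolynomial.aeval (mixed r s G) P
      = MvPolynomial.aeval (Function.uncurry G) (MvPolynomial.bind₁ (mixPoly r s) P) := by
  rw [MvPolynomial.aeval_bind₁]
  congr 2
  ext ⟨j, i⟩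
  refine Fin.cases ?_ (fun ℓ => ?_) j <;> simp [mixed, mixPoly]

instance isProbabilityMeasure_radMeasure_half : IsProbabilityMeasure (radMeasure (1 / 2)) :=
  isProbabilityMeasure_radMeasure (by norm_num) (by norm_num)

lemma integral_mixed_rad_le_gaussian {n L : ℕ} (r s : ℝ≥0)
    (P : MvPolynomial (Fin (L + 1) × Fin n) ℝ≥0) :
    ∫ G, MvPolynomial.aeval (mixed r s G) P ∂flatSpace n L (radMeasure (1 / 2))
      ≤ ∫ G, MvPolynomial.aeval (mixed r s G) P ∂flatSpace n L (gaussianReal 0 1) := by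
  simp only [aeval_mixed]
  refine integral_aeval_mono (integrable_flat_monomial fun k => integrable_radMeasure _ _)
    (integrable_flat_monomial integrable_pow_gaussianReal) (fun m => ?_) _
  rw [integral_flat_monomial, integral_flat_monomial]
  refine Finset.prod_le_prod (fun p _ => ?_) fun p _ => integral_pow_rad_le_gaussian _
  rw [integral_radMeasure (by norm_num) (by norm_num)]
  rcases neg_one_pow_eq_or ℝ (m p) with h | h <;> norm_num [h]

lemma integrable_mixed_monomial {n L : ℕ} (r s : ℝ≥0) (m : Fin (L + 1) × Fin n → ℕ) :
    Integrable (fun G : Fin (L + 1) → Fin n → ℝ => ∏ p, mixed r s G p ^ m p)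
      (flatSpace n L (radMeasure (1 / 2))) := by
  have h := integrable_aeval_of_monomials
    (integrable_flat_monomial (n := n) (L := L) fun k => integrable_radMeasure (1 / 2) (· ^ k))
    (MvPolynomial.bind₁ (mixPoly r s) (∏ p, MvPolynomial.X p ^ m p))
  simpa only [← aeval_mixed, map_prod, map_pow, MvPolynomial.aeval_X] using h

/-- The moments of the mixed uniform signs: integrate first over the rows `ℓ + 1`, and then use
`signMoment (-r) s b = (-1) ^ b * signMoment r s b` in the integral over row `0`. -/
lemma integral_mixed_monomial {n L : ℕ} (r s : ℝ≥0) (m : Fin (L + 1) × Fin n → ℕ) :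
    ∫ G : Fin (L + 1) → Fin n → ℝ, ∏ p, mixed r s G p ^ m p ∂flatSpace n L (radMeasure (1 / 2))
      = (∏ i, (1 + (-1) ^ (∑ j, m (j, i))) / 2) *
        ∏ ℓ : Fin L, ∏ i, signMoment r s (m (ℓ.succ, i)) := by
  have hmp := (measurePreserving_piFinSuccAbove
    (fun _ : Fin (L + 1) => Measure.pi fun _ : Fin n => radMeasure (1 / 2)) 0).symm
  have hint := (hmp.integrable_comp_emb (MeasurableEquiv.measurableEmbedding _)).2
    (integrable_mixed_monomial r s m)
  rw [flatSpace, ← hmp.integral_comp']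
  refine (integral_prod _ hint).trans ?_
  have hmix (y : Fin n → ℝ) (w : Fin L → Fin n → ℝ) :
      ∏ p, mixed r s ((MeasurableEquiv.piFinSuccAbove
        (fun _ : Fin (L + 1) => Fin n → ℝ) 0).symm (y, w)) p ^ m p
      = (∏ i, y i ^ m (0, i)) * ∏ ℓ, ∏ i, (r * y i + s * w ℓ i) ^ m (ℓ.succ, i) := by
    simp [Fintype.prod_prod_type, Fin.prod_univ_succ, mixed, MeasurableEquiv.piFinSuccAbove]
  simp only [Function.comp_apply, hmix, integral_const_mul]
  have hinner (y : Fin n → ℝ) :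
      ∫ w : Fin L → Fin n → ℝ, ∏ ℓ, ∏ i, (r * y i + s * w ℓ i) ^ m (ℓ.succ, i)
        ∂(Measure.pi fun _ : Fin L => Measure.pi fun _ : Fin n => radMeasure (1 / 2))
      = ∏ ℓ : Fin L, ∏ i, signMoment (r * y i) s (m (ℓ.succ, i)) := by
    rw [integral_fintype_prod_eq_prod
      (f := fun ℓ (x : Fin n → ℝ) => ∏ i, (r * y i + s * x i) ^ m (Fin.succ ℓ, i))]
    refine Finset.prod_congr rfl fun ℓ _ => ?_
    rw [integral_fintype_prod_eq_prod
      (f := fun i (x : ℝ) => (r * y i + s * x) ^ m (Fin.succ ℓ, i))]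
    refine Finset.prod_congr rfl fun i _ => ?_
    rw [integral_radMeasure (by norm_num) (by norm_num), signMoment]
    ring_nf
  simp only [hinner]
  simp only [Finset.prod_comm (s := (Finset.univ : Finset (Fin L))), ← Finset.prod_mul_distrib]
  rw [integral_fintype_prod_eq_prod
    (f := fun i (x : ℝ) => x ^ m (0, i) * ∏ ℓ : Fin L, signMoment (r * x) s (m (ℓ.succ, i)))]
  refine Finset.prod_congr rfl fun i _ => ?_
  have hneg (b : ℕ) : signMoment (r * (-1)) s b = (-1) ^ b * signMoment r s b := by
    rw [signMoment, signMoment, show (r * (-1) + s : ℝ) = (-1) * (r - s) by ring,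
      show (r * (-1) - s : ℝ) = (-1) * (r + s) by ring, mul_pow, mul_pow]
    ring
  rw [integral_radMeasure (by norm_num) (by norm_num)]
  simp only [hneg, Finset.prod_mul_distrib, Finset.prod_pow_eq_pow_sum, Fin.sum_univ_succ, pow_add,
    mul_one, one_pow]
  ring

/-! ### The overlaps of correlated signs -/

/-- The summands `x(i) x'(i)` (row `0`) and `x_ℓ(i) x'_ℓ(i)` (row `ℓ + 1`) of the overlaps. -/
def signs {n L : ℕ} (ω : ((Fin n → ℝ) × (Fin n → ℝ)) × ((Fin L → Fin n → ℝ) × (Fin L → Fin n → ℝ)))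
    (p : Fin (L + 1) × Fin n) : ℝ :=
  Fin.cases (ω.1.1 p.2 * ω.1.2 p.2)
    (fun ℓ => (ω.1.1 p.2 * ω.2.1 ℓ p.2) * (ω.1.2 p.2 * ω.2.2 ℓ p.2)) p.1

lemma signs_monomial {n L : ℕ} (m : Fin (L + 1) × Fin n → ℕ)
    (ω : ((Fin n → ℝ) × (Fin n → ℝ)) × ((Fin L → Fin n → ℝ) × (Fin L → Fin n → ℝ))) :
    ∏ p, signs ω p ^ m p = ((∏ i, ω.1.1 i ^ ∑ j, m (j, i)) * (∏ i, ω.1.2 i ^ ∑ j, m (j, i))) *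
      ((∏ ℓ, ∏ i, ω.2.1 ℓ i ^ m (ℓ.succ, i)) * (∏ ℓ, ∏ i, ω.2.2 ℓ i ^ m (ℓ.succ, i))) := by
  simp only [Fintype.prod_prod_type_right, signs, Fin.prod_univ_succ, Fin.cases_zero,
    Fin.cases_succ, Fin.sum_univ_succ, pow_add, mul_pow, Finset.prod_mul_distrib,
    ← Finset.prod_pow_eq_pow_sum]
  rw [Finset.prod_comm (s := (Finset.univ : Finset (Fin L))) (f := fun ℓ i => ω.2.1 ℓ i ^ _),
    Finset.prod_comm (s := (Finset.univ : Finset (Fin L))) (f := fun ℓ i => ω.2.2 ℓ i ^ _)]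
  ring

lemma integrable_signs_monomial {n L : ℕ} {ρ : ℝ} (h0 : 0 < ρ) (h1 : ρ ≤ 1)
    (m : Fin (L + 1) × Fin n → ℕ) :
    Integrable (fun ω => ∏ p, signs ω p ^ m p) (radSpace n L ρ) := by
  have : IsProbabilityMeasure (radMeasure ((1 + ρ) / 2)) :=
    isProbabilityMeasure_radMeasure (by linarith) (by linarith)
  simp only [signs_monomial]
  have hx : Integrable (fun x : Fin n → ℝ => ∏ i, x i ^ ∑ j, m (j, i))
      (Measure.pi fun _ => radMeasure (1 / 2)) :=
    Integrable.fintype_prod (f := fun i (x : ℝ) => x ^ ∑ j, m (j, i)) fun i =>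
      integrable_radMeasure _ _
  have hz : Integrable (fun z : Fin L → Fin n → ℝ => ∏ ℓ, ∏ i, z ℓ i ^ m (ℓ.succ, i))
      (Measure.pi fun _ => Measure.pi fun _ => radMeasure ((1 + ρ) / 2)) :=
    Integrable.fintype_prod (f := fun ℓ (x : Fin n → ℝ) => ∏ i, x i ^ m (Fin.succ ℓ, i)) fun ℓ =>
      Integrable.fintype_prod (f := fun i (x : ℝ) => x ^ m (Fin.succ ℓ, i)) fun i =>
        integrable_radMeasure _ _
  exact (hx.mul_prod hx).mul_prod (hz.mul_prod hz)

lemma integral_signs_monomial_le {n L : ℕ} {ρ : ℝ} (h0 : 0 < ρ) (h1 : ρ ≤ 1) {r s : ℝ≥0}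
    (hr : (r : ℝ) = ρ ^ 2) (hrs : (r : ℝ) ^ 2 + (s : ℝ) ^ 2 = 1) (m : Fin (L + 1) × Fin n → ℕ) :
    ∫ ω, ∏ p, signs ω p ^ m p ∂radSpace n L ρ
      ≤ ∫ G, ∏ p, mixed r s G p ^ m p ∂flatSpace n L (radMeasure (1 / 2)) := by
  have : IsProbabilityMeasure (radMeasure ((1 + ρ) / 2)) :=
    isProbabilityMeasure_radMeasure (by linarith) (by linarith)
  rw [integral_mixed_monomial]
  simp only [signs_monomial, radSpace]
  rw [integral_prod_mul (f := fun a : (Fin n → ℝ) × (Fin n → ℝ) =>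
      (∏ i, a.1 i ^ ∑ j, m (j, i)) * (∏ i, a.2 i ^ ∑ j, m (j, i)))
    (g := fun a : (Fin L → Fin n → ℝ) × (Fin L → Fin n → ℝ) =>
      (∏ ℓ, ∏ i, a.1 ℓ i ^ m (ℓ.succ, i)) * (∏ ℓ, ∏ i, a.2 ℓ i ^ m (ℓ.succ, i))),
    integral_prod_mul (f := fun a : Fin n → ℝ => ∏ i, a i ^ ∑ j, m (j, i))
      (g := fun a : Fin n → ℝ => ∏ i, a i ^ ∑ j, m (j, i)),
    integral_prod_mul (f := fun a : Fin L → Fin n → ℝ => ∏ ℓ, ∏ i, a ℓ i ^ m (ℓ.succ, i))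
      (g := fun a : Fin L → Fin n → ℝ => ∏ ℓ, ∏ i, a ℓ i ^ m (ℓ.succ, i)),
    integral_fintype_prod_eq_prod (f := fun i (x : ℝ) => x ^ ∑ j, m (j, i)),
    integral_fintype_prod_eq_prod
      (f := fun ℓ (x : Fin n → ℝ) => ∏ i, x i ^ m (Fin.succ ℓ, i))]
  have hz (ℓ : Fin L) :
      ∫ x : Fin n → ℝ, ∏ i, x i ^ m (Fin.succ ℓ, i) ∂(Measure.pi fun _ => radMeasure ((1 + ρ) / 2))
      = ∏ i, ((1 + ρ) / 2 * 1 ^ m (ℓ.succ, i) +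
          (1 - (1 + ρ) / 2) * (-1) ^ m (ℓ.succ, i)) := by
    rw [integral_fintype_prod_eq_prod (f := fun i (x : ℝ) => x ^ m (Fin.succ ℓ, i))]
    refine Finset.prod_congr rfl fun i _ => ?_
    rw [integral_radMeasure (by linarith) (by linarith)]
  simp only [hz, integral_radMeasure (p := 1 / 2) (by norm_num) (by norm_num),
    ← Finset.prod_mul_distrib]
  refine mul_le_mul (le_of_eq ?_) ?_ ?_ ?_
  · refine Finset.prod_congr rfl fun i _ => ?_
    rcases neg_one_pow_eq_or ℝ (∑ j, m (j, i)) with h | h <;> norm_num [h]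
  · refine Finset.prod_le_prod (fun ℓ _ => Finset.prod_nonneg fun i _ => mul_self_nonneg _)
      fun ℓ _ => Finset.prod_le_prod (fun i _ => mul_self_nonneg _) fun i _ => ?_
    rw [← sq, hr]
    exact signMoment_bound s.2 (hr ▸ hrs) _
  · exact Finset.prod_nonneg fun ℓ _ => Finset.prod_nonneg fun i _ => mul_self_nonneg _
  · refine Finset.prod_nonneg fun i _ => ?_
    rcases neg_one_pow_eq_or ℝ (∑ j, m (j, i)) with h | h <;> norm_num [h]

/-- The product of the even powers of the row sums normalized by `√n`, as a polynomial in the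
entries. -/
noncomputable def overlapPoly (n L α : ℕ) (αv : Fin L → ℕ) :
    MvPolynomial (Fin (L + 1) × Fin n) ℝ≥0 :=
  (MvPolynomial.C (NNReal.sqrt n)⁻¹ * ∑ i, MvPolynomial.X (0, i)) ^ (2 * α) *
    ∏ ℓ, (MvPolynomial.C (NNReal.sqrt n)⁻¹ * ∑ i, MvPolynomial.X (ℓ.succ, i)) ^ (2 * αv ℓ)

lemma aeval_overlapPoly {n L α : ℕ} (αv : Fin L → ℕ) (x : Fin (L + 1) × Fin n → ℝ) :
    MvPolynomial.aeval x (overlapPoly n L α αv) = ((∑ i, x (0, i)) / √n) ^ (2 * α) *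
      ∏ ℓ : Fin L, ((∑ i, x (ℓ.succ, i)) / √n) ^ (2 * αv ℓ) := by
  simp [overlapPoly, div_eq_inv_mul]

/-- the even joint moments of the normalized overlaps
`⟨x,x'⟩/√n, ⟨x_ℓ,x'_ℓ⟩/√n` (with `x_ℓ = x ⊙ z_ℓ`, `x'_ℓ = x' ⊙ z'_ℓ`) are dominated by the
corresponding joint moments of the correlated Gaussians `U, V_ℓ = ρ²U + √(1-ρ⁴) W_ℓ`. -/
theorem bernoulli_gaussian_moment_comparison
    (n L : ℕ) (hn : 1 ≤ n) (hL : 1 ≤ L) (ρ : ℝ) (hρ : ρ ∈ Set.Ioc (0 : ℝ) 1)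
    (α : ℕ) (αv : Fin L → ℕ) :
    (∫ ω, ((∑ i, ω.1.1 i * ω.1.2 i) / Real.sqrt n) ^ (2 * α) *
        ∏ ℓ, ((∑ i, (ω.1.1 i * ω.2.1 ℓ i) * (ω.1.2 i * ω.2.2 ℓ i)) / Real.sqrt n) ^ (2 * αv ℓ)
        ∂(radSpace n L ρ)) ≤
      ∫ g, (g 0) ^ (2 * α) *
        ∏ ℓ : Fin L, (ρ ^ 2 * g 0 + Real.sqrt (1 - ρ ^ 4) * g ℓ.succ) ^ (2 * αv ℓ)
        ∂(gaussSpace L) := by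
  obtain ⟨h0, h1⟩ := hρ
  have h4 : 0 ≤ 1 - ρ ^ 4 := sub_nonneg.2 (pow_le_one₀ h0.le h1)
  let r : ℝ≥0 := ⟨ρ ^ 2, by positivity⟩
  let s : ℝ≥0 := ⟨√(1 - ρ ^ 4), by positivity⟩
  have hrs : (r : ℝ) ^ 2 + (s : ℝ) ^ 2 = 1 := by
    change (ρ ^ 2) ^ 2 + √(1 - ρ ^ 4) ^ 2 = 1
    rw [Real.sq_sqrt h4]; ring
  have hgauss : gaussSpace L = (flatSpace n L (gaussianReal 0 1)).map
      (fun G j => (∑ i, G j i) / √n) := by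
    rw [flatSpace, Measure.pi_map_pi (f := fun _ (x : Fin n → ℝ) => (∑ i, x i) / √n)
      (hμ := fun _ => by rw [map_sum_div_sqrt_gaussian hn]; infer_instance)
      (fun _ => by fun_prop)]
    simp only [map_sum_div_sqrt_gaussian hn, gaussSpace]
  calc _ = ∫ ω, MvPolynomial.aeval (signs ω) (overlapPoly n L α αv) ∂radSpace n L ρ := by
        simp only [aeval_overlapPoly, signs, Fin.cases_zero, Fin.cases_succ]
    _ ≤ ∫ G, MvPolynomial.aeval (mixed r s G) (overlapPoly n L α αv)
          ∂flatSpace n L (radMeasure (1 / 2)) :=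
        integral_aeval_mono (integrable_signs_monomial h0 h1) (integrable_mixed_monomial r s)
          (integral_signs_monomial_le h0 h1 rfl hrs) _
    _ ≤ ∫ G, MvPolynomial.aeval (mixed r s G) (overlapPoly n L α αv)
          ∂flatSpace n L (gaussianReal 0 1) := integral_mixed_rad_le_gaussian r s _
    _ = _ := by
        rw [hgauss, integral_map (Measurable.aemeasurable (by fun_prop)) (by fun_prop)]
        simp only [aeval_overlapPoly, mixed, Fin.cases_zero, Fin.cases_succ,
          Finset.sum_add_distrib, ← Finset.mul_sum, add_div, mul_div_assoc]
        rfl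
end

section
/- With ε, δ_1, …, δ_L and U, V_1, …, V_L as in the context, for all natural numbers β, β_1, …, β_L one has 0 ≤ E[ε^β · ∏_{ℓ=1}^L (ε·δ_ℓ)^{β_ℓ}] ≤ E[U^β · ∏_{ℓ=1}^L V_ℓ^{β_ℓ}]. -/
/-!
Both `ε` and a standard Gaussian are symmetric, and every even Gaussian moment is at least `1`.
Hence the expectation of a polynomial with nonnegative coefficients under the Gaussian law is at
least its expectation `(p(1) + p(-1)) / 2` under a uniform sign (`sign_le_gaussian_eval`).

Integrating out the `W_ℓ` turns the right-hand side into
`E[U ^ β * ∏ q_{β_ℓ}(U)]`, where `q_b(u) = E[(ρ² u + s W) ^ b]` and `s = √(1 - ρ⁴)`. Each `q_b` is a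
polynomial in `u` with nonnegative coefficients and with the parity of `b`, so the comparison
bounds this below by `∏ q_{β_ℓ}(1)` when `β + ∑ β_ℓ` is even and by `0` when it is odd. Applied
once more, now in the variable `W`, the comparison gives
`q_b(1) ≥ ((ρ² + s) ^ b + (ρ² - s) ^ b) / 2`. Since `(ρ²)² + s² = 1`, this is at least `1` for even
`b` and at least `ρ²` for odd `b` (`sign_moment_lower`), which is exactly `E[δ ^ b]`. The left-hand
side equals `∏ E[δ_ℓ ^ β_ℓ]` or `0` according to the same parity.
-/

open MeasureTheory ProbabilityTheory

/-- Joint law of `(ε, δ_1, …, δ_L)`: `ε` is a uniform sign and the `δ_ℓ` are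
independent signs with `P(δ_ℓ = 1) = (1+ρ²)/2`. -/
noncomputable def signSpace (L : ℕ) (ρ : ℝ) : Measure (ℝ × (Fin L → ℝ)) :=
  (radMeasure (1 / 2)).prod (Measure.pi fun _ : Fin L => radMeasure ((1 + ρ ^ 2) / 2))

lemma integrable_gaussian_pow (n : ℕ) : Integrable (fun x : ℝ => x ^ n) (gaussianReal 0 1) := by
  rw [← integrable_norm_iff (by fun_prop)]
  simpa using (memLp_id_gaussianReal' (μ := 0) (v := 1) (n : ENNReal) (by simp)).integrable_norm_pow'

/-- Gaussian moments dominate those of a uniform sign. The even case integrates Bernoulli's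
inequality `x ^ (2k) ≥ 1 + k (x² - 1)`. -/
lemma sign_le_gaussian_pow (n : ℕ) :
    ((1 : ℝ) + (-1) ^ n) / 2 ≤ ∫ x, x ^ n ∂(gaussianReal 0 1) := by
  have hInt := integrable_gaussian_pow
  have hsq : ∫ x, x ^ 2 ∂(gaussianReal 0 1) = 1 := by
    have h := variance_fun_id_gaussianReal (μ := 0) (v := 1)
    rw [variance_eq_integral (by fun_prop)] at h
    simpa using h
  rcases Nat.even_or_odd n with ⟨k, rfl⟩ | hn
  · have h1 : ∫ x : ℝ, (1 + (k : ℝ) * (x ^ 2 - 1)) ∂(gaussianReal 0 1)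
        ≤ ∫ x : ℝ, x ^ (k + k) ∂(gaussianReal 0 1) := by
      apply integral_mono
      · exact (integrable_const _).add (((hInt 2).sub (integrable_const _)).const_mul _)
      · exact hInt _
      · intro x
        have := one_add_mul_le_pow (a := x ^ 2 - 1) (by nlinarith [sq_nonneg x]) k
        simp only
        calc _ ≤ _ := this
          _ = x ^ (k + k) := by rw [add_sub_cancel, ← pow_mul, two_mul]
    have h2 : ∫ x : ℝ, (1 + (k : ℝ) * (x ^ 2 - 1)) ∂(gaussianReal 0 1) = 1 := by
      have hi : Integrable (fun x : ℝ => x ^ 2 - 1) (gaussianReal 0 1) :=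
        (hInt 2).sub (integrable_const _)
      rw [integral_add (integrable_const _) (hi.const_mul _),
        integral_const_mul, integral_sub (hInt 2) (integrable_const _), hsq]
      simp
    rw [h2] at h1
    simpa using h1
  · have h : ∫ x, x ^ n ∂(gaussianReal 0 1) = - ∫ x, x ^ n ∂(gaussianReal 0 1) := by
      conv_lhs => rw [← neg_zero, ← gaussianReal_map_neg]
      rw [integral_map (by fun_prop) (by fun_prop), ← integral_neg]
      simp [hn.neg_pow]
    rw [hn.neg_one_pow]
    linarith

open Polynomial in
/-- For a polynomial with nonnegative coefficients, the expectation under a uniform sign is at most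
the expectation under the standard Gaussian law. -/
lemma sign_le_gaussian_eval (p : ℝ[X]) (hp : ∀ i, 0 ≤ p.coeff i) :
    (p.eval 1 + p.eval (-1)) / 2 ≤ ∫ x, p.eval x ∂(gaussianReal 0 1) := by
  simp_rw [eval_eq_sum_range]
  rw [integral_finsetSum _ fun i _ => (integrable_gaussian_pow i).const_mul _,
    ← Finset.sum_add_distrib, Finset.sum_div]
  refine Finset.sum_le_sum fun i _ => ?_
  rw [integral_const_mul]
  have := mul_le_mul_of_nonneg_left (sign_le_gaussian_pow i) (hp i)
  calc _ = _ := by rw [one_pow]; ring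
    _ ≤ _ := this

open Polynomial in
lemma coeff_mul_nonneg {p q : ℝ[X]} (hp : ∀ i, 0 ≤ p.coeff i) (hq : ∀ i, 0 ≤ q.coeff i) :
    ∀ i, 0 ≤ (p * q).coeff i := fun i => by
  rw [coeff_mul]
  exact Finset.sum_nonneg fun x _ => mul_nonneg (hp _) (hq _)

open Polynomial in
lemma coeff_prod_nonneg {ι : Type*} (s : Finset ι) (p : ι → ℝ[X])
    (hp : ∀ l ∈ s, ∀ i, 0 ≤ (p l).coeff i) : ∀ i, 0 ≤ (∏ l ∈ s, p l).coeff i := by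
  induction s using Finset.cons_induction with
  | empty => intro i; rw [Finset.prod_empty, coeff_one]; split_ifs <;> norm_num
  | cons a s ha ih =>
    rw [Finset.prod_cons]
    exact coeff_mul_nonneg (hp a (Finset.mem_cons_self a s))
      (ih fun l hl => hp l (Finset.mem_cons_of_mem hl))

lemma gaussian_moment_nonneg (n : ℕ) : 0 ≤ ∫ x, x ^ n ∂(gaussianReal 0 1) := by
  refine le_trans ?_ (sign_le_gaussian_pow n)
  rcases neg_one_pow_eq_or ℝ n with h | h <;> rw [h] <;> norm_num

open Polynomial in
/-- `u ↦ E[(r u + s W) ^ b]` is a polynomial with nonnegative coefficients. -/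
lemma exists_condMoment_poly (r s : ℝ) (hr : 0 ≤ r) (hs : 0 ≤ s) (b : ℕ) :
    ∃ p : ℝ[X], (∀ i, 0 ≤ p.coeff i) ∧
      ∀ u, p.eval u = ∫ w, (r * u + s * w) ^ b ∂(gaussianReal 0 1) := by
  refine ⟨∑ m ∈ Finset.range (b + 1), C (r ^ m * s ^ (b - m) * (b.choose m) *
    ∫ w, w ^ (b - m) ∂(gaussianReal 0 1)) * X ^ m, fun i => ?_, fun u => ?_⟩
  · rw [finsetSum_coeff]
    refine Finset.sum_nonneg fun m _ => ?_
    rw [coeff_C_mul_X_pow]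
    have := gaussian_moment_nonneg (b - m)
    split_ifs <;> positivity
  · have h : ∀ w : ℝ, (r * u + s * w) ^ b = ∑ m ∈ Finset.range (b + 1),
        ((r * u) ^ m * s ^ (b - m) * (b.choose m)) * w ^ (b - m) := fun w => by
      rw [add_pow]
      refine Finset.sum_congr rfl fun m _ => ?_
      rw [mul_pow s w]; ring
    simp_rw [h]
    rw [integral_finsetSum _ fun i _ => (integrable_gaussian_pow _).const_mul _, eval_finsetSum]
    refine Finset.sum_congr rfl fun m _ => ?_
    rw [integral_const_mul]
    simp only [eval_mul, eval_C, eval_pow, eval_X]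
    ring

/-- With `t = 2 r s`, the squares of `r ± s` are `1 ± t`; the half-sum and half-difference of
`(1 ± t) ^ k` stay at least `1` and `0` respectively. -/
lemma sign_moment_lower (r s : ℝ) (hr : 0 ≤ r) (hs : 0 ≤ s) (hrs : r ^ 2 + s ^ 2 = 1) (b : ℕ) :
    (1 + r) / 2 + (1 - r) / 2 * (-1) ^ b ≤ ((r + s) ^ b + (r - s) ^ b) / 2 := by
  have ht : 0 ≤ 2 * r * s := by positivity
  have key : ∀ k : ℕ, 2 ≤ (1 + 2 * r * s) ^ k + (1 - 2 * r * s) ^ k ∧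
      0 ≤ (1 + 2 * r * s) ^ k - (1 - 2 * r * s) ^ k := by
    intro k
    induction k with
    | zero => norm_num
    | succ k ih =>
      obtain ⟨h1, h2⟩ := ih
      rw [pow_succ, pow_succ]
      constructor <;> nlinarith [mul_nonneg ht h2, mul_nonneg ht (by linarith : 0 ≤
        (1 + 2 * r * s) ^ k + (1 - 2 * r * s) ^ k)]
  have hp : (r + s) ^ 2 = 1 + 2 * r * s := by linear_combination hrs
  have hm : (r - s) ^ 2 = 1 - 2 * r * s := by linear_combination hrs
  obtain ⟨k, rfl | rfl⟩ := Nat.even_or_odd' b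
  · rw [pow_mul, pow_mul, pow_mul, hp, hm]
    have := (key k).1
    norm_num
    linarith
  · rw [pow_succ, pow_succ, pow_succ, pow_mul, pow_mul, pow_mul, hp, hm]
    obtain ⟨h1, h2⟩ := key k
    norm_num
    nlinarith [mul_nonneg hs h2, mul_nonneg hr (sub_nonneg.2 h1)]

lemma condMoment_neg_one (r s : ℝ) (b : ℕ) :
    ∫ w, (r * (-1) + s * w) ^ b ∂(gaussianReal 0 1) =
      (-1) ^ b * ∫ w, (r * 1 + s * w) ^ b ∂(gaussianReal 0 1) := by
  conv_lhs => rw [← neg_zero, ← gaussianReal_map_neg]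
  rw [integral_map (by fun_prop) (by fun_prop), ← integral_const_mul]
  congr 1
  ext w
  rw [← mul_pow]
  congr 1
  ring

open Polynomial in
lemma condMoment_one_lower (r s : ℝ) (hr : 0 ≤ r) (hs : 0 ≤ s) (hrs : r ^ 2 + s ^ 2 = 1)
    (b : ℕ) :
    (1 + r) / 2 + (1 - r) / 2 * (-1) ^ b ≤ ∫ w, (r * 1 + s * w) ^ b ∂(gaussianReal 0 1) := by
  refine (sign_moment_lower r s hr hs hrs b).trans ?_
  have h := sign_le_gaussian_eval ((C r + C s * X) ^ b) (by
    rw [← Fin.prod_const]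
    refine coeff_prod_nonneg _ _ fun _ _ i => ?_
    rw [coeff_add, coeff_C, coeff_C_mul, coeff_X]
    split_ifs <;> simp [hr, hs, add_nonneg])
  simpa [sub_eq_add_neg] using h

/-- `f` has finite moments of every order; unlike plain integrability this is stable under
products. -/
def AllMoments {α : Type*} [MeasurableSpace α] (μ : Measure α) (f : α → ℝ) : Prop :=
  ∀ n : ℕ, MemLp f n μ

lemma AllMoments.mul {α : Type*} [MeasurableSpace α] {μ : Measure α} {f g : α → ℝ}
    (hf : AllMoments μ f) (hg : AllMoments μ g) : AllMoments μ (fun x => f x * g x) := fun n => by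
  refine (hg (2 * n)).mul' (hf (2 * n)) (hpqr := ⟨?_⟩)
  push_cast
  rw [ENNReal.mul_inv (by simp) (by simp), ← add_mul, ENNReal.inv_two_add_inv_two, one_mul]

lemma AllMoments.prod {α ι : Type*} [MeasurableSpace α] {μ : Measure α} [IsFiniteMeasure μ]
    (s : Finset ι) {f : ι → α → ℝ} (hf : ∀ i ∈ s, AllMoments μ (f i)) :
    AllMoments μ (fun x => ∏ i ∈ s, f i x) := by
  induction s using Finset.cons_induction with
  | empty => intro n; simpa using memLp_const (1 : ℝ)
  | cons a s ha ih =>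
    simp_rw [Finset.prod_cons]
    exact (hf a (Finset.mem_cons_self a s)).mul (ih fun i hi => hf i (Finset.mem_cons_of_mem hi))

lemma AllMoments.pow {α : Type*} [MeasurableSpace α] {μ : Measure α} [IsFiniteMeasure μ]
    {f : α → ℝ} (hf : AllMoments μ f) (k : ℕ) : AllMoments μ (fun x => f x ^ k) := by
  simpa using AllMoments.prod (Finset.range k) fun _ _ => hf

/-- Integrating out the coordinates `W_ℓ` first. -/
lemma gaussSpace_integral (L : ℕ) (r s : ℝ) (β : ℕ) (βv : Fin L → ℕ) :
    ∫ g, (g 0) ^ β * ∏ ℓ : Fin L, (r * g 0 + s * g ℓ.succ) ^ βv ℓ ∂(gaussSpace L) =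
      ∫ u, u ^ β * ∏ ℓ, ∫ w, (r * u + s * w) ^ βv ℓ ∂(gaussianReal 0 1)
        ∂(gaussianReal 0 1) := by
  have hcoord : ∀ i, AllMoments (gaussSpace L) (fun g => g i) := fun i n =>
    (memLp_id_gaussianReal' (n : ENNReal) (by simp)).comp_measurePreserving
      (measurePreserving_eval (fun _ : Fin (L + 1) => gaussianReal 0 1) i)
  have : IsProbabilityMeasure (gaussSpace L) := by unfold gaussSpace; infer_instance
  have hInt : Integrable (fun g : Fin (L + 1) → ℝ =>
      (g 0) ^ β * ∏ ℓ : Fin L, (r * g 0 + s * g ℓ.succ) ^ βv ℓ) (gaussSpace L) := by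
    have h : AllMoments (gaussSpace L) (fun g : Fin (L + 1) → ℝ =>
        (g 0) ^ β * ∏ ℓ : Fin L, (r * g 0 + s * g ℓ.succ) ^ βv ℓ) :=
      ((hcoord 0).pow β).mul (AllMoments.prod _ fun ℓ _ => AllMoments.pow
        (fun n => ((hcoord 0 n).const_mul r).add ((hcoord ℓ.succ n).const_mul s)) _)
    exact memLp_one_iff_integrable.1 (by simpa using h 1)
  have hmp := (measurePreserving_piFinSuccAbove
    (fun _ : Fin (L + 1) => gaussianReal 0 1) 0).symm
  unfold gaussSpace at hInt ⊢
  rw [← hmp.integrable_comp_emb (MeasurableEquiv.measurableEmbedding _)] at hInt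
  rw [← hmp.integral_comp']
  simp only [Function.comp_def, MeasurableEquiv.piFinSuccAbove_symm_apply, Fin.insertNthEquiv,
    Fin.insertNth_zero, Equiv.coe_fn_mk, Fin.cons_succ, Fin.zero_succAbove, cast_eq,
    Fin.cons_zero] at hInt ⊢
  rw [integral_prod _ hInt]
  refine integral_congr_ae (Filter.Eventually.of_forall fun u => ?_)
  simp only
  rw [integral_const_mul]
  congr 1
  exact integral_fintype_prod_eq_prod (fun ℓ w => (r * u + s * w) ^ βv ℓ)

instance isFiniteMeasure_radMeasure (p : ℝ) : IsFiniteMeasure (radMeasure p) := by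
  unfold radMeasure
  have h1 : IsFiniteMeasure (ENNReal.ofReal p • Measure.dirac (1 : ℝ)) :=
    Measure.smul_finite _ ENNReal.ofReal_ne_top
  have h2 : IsFiniteMeasure (ENNReal.ofReal (1 - p) • Measure.dirac (-1 : ℝ)) :=
    Measure.smul_finite _ ENNReal.ofReal_ne_top
  infer_instance

lemma radMeasure_moment (p : ℝ) (hp : 0 ≤ p) (hp1 : p ≤ 1) (n : ℕ) :
    ∫ x, x ^ n ∂(radMeasure p) = p + (1 - p) * (-1) ^ n := by
  unfold radMeasure
  rw [integral_add_measure, integral_smul_measure, integral_smul_measure, integral_dirac,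
    integral_dirac, ENNReal.toReal_ofReal hp, ENNReal.toReal_ofReal (by linarith)]
  · simp
  · exact (integrable_dirac (by simp)).smul_measure ENNReal.ofReal_ne_top
  · exact (integrable_dirac (by simp)).smul_measure ENNReal.ofReal_ne_top

lemma signSpace_integral (L : ℕ) (ρ : ℝ) (hρ : ρ ^ 2 ≤ 1) (β : ℕ) (βv : Fin L → ℕ) :
    ∫ ω, ω.1 ^ β * ∏ ℓ, (ω.1 * ω.2 ℓ) ^ βv ℓ ∂(signSpace L ρ) =
      (1 + (-1) ^ (β + ∑ ℓ, βv ℓ)) / 2 *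
        ∏ ℓ, ((1 + ρ ^ 2) / 2 + (1 - ρ ^ 2) / 2 * (-1) ^ βv ℓ) := by
  have h : ∀ ω : ℝ × (Fin L → ℝ), ω.1 ^ β * ∏ ℓ, (ω.1 * ω.2 ℓ) ^ βv ℓ =
      ω.1 ^ (β + ∑ ℓ, βv ℓ) * ∏ ℓ, ω.2 ℓ ^ βv ℓ := fun ω => by
    simp_rw [mul_pow]
    rw [Finset.prod_mul_distrib, Finset.prod_pow_eq_pow_sum, pow_add, mul_assoc]
  simp_rw [h]
  unfold signSpace
  rw [integral_prod_mul (fun x : ℝ => x ^ (β + ∑ ℓ, βv ℓ))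
    (fun y : Fin L → ℝ => ∏ ℓ, y ℓ ^ βv ℓ),
    integral_fintype_prod_eq_prod (fun ℓ (x : ℝ) => x ^ βv ℓ),
    radMeasure_moment _ (by norm_num) (by norm_num)]
  congr 1
  · ring
  · refine Finset.prod_congr rfl fun ℓ _ => ?_
    rw [radMeasure_moment _ (by positivity) (by linarith)]
    ring

/-- the joint moments `E[ε^β ∏_ℓ (ε δ_ℓ)^{β_ℓ}]` are nonnegative and
dominated by the Gaussian moments `E[U^β ∏_ℓ V_ℓ^{β_ℓ}]` with `V_ℓ = ρ²U + √(1-ρ⁴)W_ℓ`. -/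
theorem sign_gaussian_single_coordinate_moment_comparison
    (L : ℕ) (hL : 1 ≤ L) (ρ : ℝ) (hρ : ρ ∈ Set.Ioc (0 : ℝ) 1)
    (β : ℕ) (βv : Fin L → ℕ) :
    0 ≤ (∫ ω, ω.1 ^ β * ∏ ℓ, (ω.1 * ω.2 ℓ) ^ βv ℓ ∂(signSpace L ρ)) ∧
    (∫ ω, ω.1 ^ β * ∏ ℓ, (ω.1 * ω.2 ℓ) ^ βv ℓ ∂(signSpace L ρ)) ≤
      ∫ g, (g 0) ^ β *
        ∏ ℓ : Fin L, (ρ ^ 2 * g 0 + Real.sqrt (1 - ρ ^ 4) * g ℓ.succ) ^ βv ℓ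
        ∂(gaussSpace L) := by
  obtain ⟨hρ0, hρ1⟩ := hρ
  have hρ2 : ρ ^ 2 ≤ 1 := pow_le_one₀ hρ0.le hρ1
  have hr : 0 ≤ ρ ^ 2 := sq_nonneg ρ
  have hs : 0 ≤ Real.sqrt (1 - ρ ^ 4) := Real.sqrt_nonneg _
  have hrs : (ρ ^ 2) ^ 2 + Real.sqrt (1 - ρ ^ 4) ^ 2 = 1 := by
    rw [Real.sq_sqrt (by linarith [pow_le_one₀ (n := 4) hρ0.le hρ1])]
    ring
  have hδ : ∀ b : ℕ, 0 ≤ (1 + ρ ^ 2) / 2 + (1 - ρ ^ 2) / 2 * (-1) ^ b := fun b => by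
    rcases neg_one_pow_eq_or ℝ b with h | h <;> rw [h] <;> linarith
  have hε : (0 : ℝ) ≤ (1 + (-1) ^ (β + ∑ ℓ, βv ℓ)) / 2 := by
    rcases neg_one_pow_eq_or ℝ (β + ∑ ℓ, βv ℓ) with h | h <;> rw [h] <;> norm_num
  rw [signSpace_integral L ρ hρ2, gaussSpace_integral]
  refine ⟨mul_nonneg hε (Finset.prod_nonneg fun ℓ _ => hδ _), ?_⟩
  choose q hq0 hq using fun b : ℕ =>
    exists_condMoment_poly (ρ ^ 2) (Real.sqrt (1 - ρ ^ 4)) hr hs b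
  have hcmp := sign_le_gaussian_eval (Polynomial.X ^ β * ∏ ℓ, q (βv ℓ))
    (coeff_mul_nonneg (fun i => by rw [Polynomial.coeff_X_pow]; split_ifs <;> norm_num)
      (coeff_prod_nonneg _ _ fun ℓ _ => hq0 _))
  simp only [Polynomial.eval_mul, Polynomial.eval_pow, Polynomial.eval_X, Polynomial.eval_prod,
    hq, condMoment_neg_one] at hcmp
  refine le_trans ?_ hcmp
  rw [Finset.prod_mul_distrib, Finset.prod_pow_eq_pow_sum, one_pow, one_mul, ← mul_assoc,
    ← pow_add, ← one_add_mul, mul_div_right_comm]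
  exact mul_le_mul_of_nonneg_left (Finset.prod_le_prod (fun ℓ _ => hδ _) fun ℓ _ =>
    condMoment_one_lower _ _ hr hs hrs _) hε
end

section
/- With ε, δ_1, …, δ_L as in the context, for all natural numbers β, β_1, …, β_L one has E[ε^β · ∏_{ℓ=1}^L (ε·δ_ℓ)^{β_ℓ}] = 1_{β+β_1+⋯+β_L is even} · ρ^{2·N_odd}, where N_odd = #{1 ≤ ℓ ≤ L : β_ℓ is odd}. -/
/-!
Collecting powers of `ε` turns the integrand into `ε ^ (β + ∑ βv ℓ) * ∏ δ_ℓ ^ βv ℓ`, whose factors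
depend on different coordinates of a product measure, so the integral is the product of the
one-dimensional moments (`integral_pow_radMeasure`). A sign has even moments `1` and odd moments
`2 p - 1`, which is `0` for `ε` and `ρ ^ 2` for each `δ_ℓ`.
-/

open MeasureTheory ProbabilityTheory

instance (p : ℝ) : IsFiniteMeasure (radMeasure p) := by
  unfold radMeasure
  have := Measure.smul_finite (Measure.dirac (1 : ℝ)) (ENNReal.ofReal_ne_top (r := p))
  have := Measure.smul_finite (Measure.dirac (-1 : ℝ)) (ENNReal.ofReal_ne_top (r := 1 - p))
  infer_instance

lemma integral_pow_radMeasure {p : ℝ} (h0 : 0 ≤ p) (h1 : p ≤ 1) (n : ℕ) :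
    ∫ x, x ^ n ∂(radMeasure p) = if Even n then 1 else 2 * p - 1 := by
  unfold radMeasure
  rw [integral_add_measure
      ((integrable_dirac (by simp)).smul_measure ENNReal.ofReal_ne_top)
      ((integrable_dirac (by simp)).smul_measure ENNReal.ofReal_ne_top),
    integral_smul_measure, integral_smul_measure, integral_dirac, integral_dirac,
    ENNReal.toReal_ofReal h0, ENNReal.toReal_ofReal (sub_nonneg.2 h1)]
  split_ifs with h
  · simp [h.neg_one_pow]
  · simp only [(Nat.not_even_iff_odd.1 h).neg_one_pow, one_pow, smul_eq_mul]
    ring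

/-- `E[ε^β ∏_ℓ (ε δ_ℓ)^{β_ℓ}] = 1_{β+β_1+⋯+β_L even} · ρ^{2 N_odd}`,
where `N_odd` is the number of indices `ℓ` with `β_ℓ` odd. -/
theorem sign_moment_formula
    (L : ℕ) (hL : 1 ≤ L) (ρ : ℝ) (hρ : ρ ∈ Set.Ioc (0 : ℝ) 1)
    (β : ℕ) (βv : Fin L → ℕ) :
    (∫ ω, ω.1 ^ β * ∏ ℓ, (ω.1 * ω.2 ℓ) ^ βv ℓ ∂(signSpace L ρ)) =
      (if Even (β + ∑ ℓ, βv ℓ) then 1 else 0) *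
        ρ ^ (2 * (Finset.univ.filter fun ℓ : Fin L => Odd (βv ℓ)).card) := by
  have hsq : ρ ^ 2 ≤ 1 := pow_le_one₀ hρ.1.le hρ.2
  have hfactor : ∀ ω : ℝ × (Fin L → ℝ), ω.1 ^ β * ∏ ℓ, (ω.1 * ω.2 ℓ) ^ βv ℓ =
      ω.1 ^ (β + ∑ ℓ, βv ℓ) * ∏ ℓ, ω.2 ℓ ^ βv ℓ := fun ω => by
    simp only [mul_pow, Finset.prod_mul_distrib, Finset.prod_pow_eq_pow_sum, pow_add, mul_assoc]
  simp only [hfactor]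
  unfold signSpace
  rw [integral_prod_mul (fun x : ℝ => x ^ (β + ∑ ℓ, βv ℓ))
      (fun y : Fin L → ℝ => ∏ ℓ, y ℓ ^ βv ℓ),
    integral_fintype_prod_eq_prod (fun ℓ (x : ℝ) => x ^ βv ℓ),
    integral_pow_radMeasure (by norm_num) (by norm_num)]
  congr 1
  · norm_num
  · have hmoment : ∀ ℓ, ∫ x, x ^ βv ℓ ∂(radMeasure ((1 + ρ ^ 2) / 2)) =
        if Odd (βv ℓ) then ρ ^ 2 else 1 := fun ℓ => by
      rw [integral_pow_radMeasure (by positivity) (by linarith)]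
      by_cases h : Even (βv ℓ)
      · simp [h]
      · simp only [h, if_false, Nat.not_even_iff_odd.1 h, if_true]
        ring
    simp only [hmoment]
    rw [Finset.prod_ite]
    simp [pow_mul]
end

section
/- With U, V_1, …, V_L as in the context, let a ≥ 0 and b_1, …, b_L ≥ 0 satisfy (1−ρ⁴)·b_ℓ < 1 for every 1 ≤ ℓ ≤ L and 2a + Σ_{ℓ=1}^L ρ⁴·b_ℓ/(1−(1−ρ⁴)·b_ℓ) < 1. Then E[exp(a·U² + Σ_{ℓ=1}^L (b_ℓ/2)·V_ℓ²)] = (1 − 2a − Σ_{ℓ=1}^L ρ⁴·b_ℓ/(1−(1−ρ⁴)·b_ℓ))^{−1/2} · ∏_{ℓ=1}^L (1−(1−ρ⁴)·b_ℓ)^{−1/2}; in particular this expectation is finite. -/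
/-!
Condition on `U`. For fixed `U = u` the integrand splits as a product over `ℓ` of functions of
`W_ℓ` alone, each the exponential of a quadratic polynomial. Completing the square gives
`E[exp(s W² + t W)] = (1 - 2s)^{-1/2} exp(t² / (2(1 - 2s)))` for `2s < 1`
(`integrable_exp_quadratic_gaussian`, `integral_exp_quadratic_gaussian`). With `c = 1 - ρ⁴`,
`s = c b_ℓ / 2` and `t = b_ℓ ρ² √c u`, the exponents in `u²` combine to
`ρ⁴ b_ℓ / (2(1 - c b_ℓ))` (`integral_fiber`). What remains is the same one-dimensional
integral in `U` with no linear term. As the integrand is positive, integrability of these iterated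
integrals gives integrability on the product space, and Fubini's theorem gives the value.
-/

open MeasureTheory ProbabilityTheory

/-- Completing the square in the Gaussian density times the exponential of a quadratic. -/
lemma gaussianPDFReal_mul_exp_quadratic (s t x : ℝ) (hs : 2 * s < 1) :
    gaussianPDFReal 0 1 x * Real.exp (s * x ^ 2 + t * x) =
      ((√(2 * Real.pi))⁻¹ * Real.exp (t ^ 2 / (2 * (1 - 2 * s)))) *
        Real.exp (-((1 - 2 * s) / 2) * (x - t / (1 - 2 * s)) ^ 2) := by
  have hd : 1 - 2 * s ≠ 0 := by linarith
  simp only [gaussianPDFReal, NNReal.coe_one, mul_one, sub_zero]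
  rw [mul_assoc, mul_assoc, ← Real.exp_add, ← Real.exp_add]
  congr 2
  field_simp
  ring

lemma integrable_exp_quadratic_gaussian (s t : ℝ) (hs : 2 * s < 1) :
    Integrable (fun x : ℝ => Real.exp (s * x ^ 2 + t * x)) (gaussianReal 0 1) := by
  rw [gaussianReal_of_var_ne_zero _ one_ne_zero,
    integrable_withDensity_iff_integrable_smul' (measurable_gaussianPDF 0 1)
      (ae_of_all _ fun _ => gaussianPDF_lt_top)]
  simp only [toReal_gaussianPDF, smul_eq_mul, gaussianPDFReal_mul_exp_quadratic s t _ hs]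
  exact ((integrable_exp_neg_mul_sq (by linarith : 0 < (1 - 2 * s) / 2)).comp_sub_right
    (t / (1 - 2 * s))).const_mul _

lemma integral_exp_quadratic_gaussian (s t : ℝ) (hs : 2 * s < 1) :
    ∫ x, Real.exp (s * x ^ 2 + t * x) ∂(gaussianReal 0 1) =
      (1 - 2 * s) ^ (-(1 / 2 : ℝ)) * Real.exp (t ^ 2 / (2 * (1 - 2 * s))) := by
  have hd : 0 < 1 - 2 * s := by linarith
  rw [integral_gaussianReal_eq_integral_smul one_ne_zero]
  simp only [smul_eq_mul, gaussianPDFReal_mul_exp_quadratic s t _ hs]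
  rw [integral_const_mul, integral_sub_right_eq_self
    (fun x : ℝ => Real.exp (-((1 - 2 * s) / 2) * x ^ 2)) (t / (1 - 2 * s)), integral_gaussian,
    Real.rpow_neg hd.le, ← Real.sqrt_eq_rpow,
    show Real.pi / ((1 - 2 * s) / 2) = (2 * Real.pi) / (1 - 2 * s) by field_simp,
    Real.sqrt_div (by positivity)]
  have h1 : √(2 * Real.pi) ≠ 0 := by positivity
  field_simp

/-- Expansion of the exponent in the variable `w`, after extracting the `w`-free part. -/
lemma exp_sq_split (β r c u w : ℝ) (hc : 0 ≤ c) :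
    Real.exp (β / 2 * (r ^ 2 * u + √c * w) ^ 2) =
      Real.exp (r ^ 4 * β / 2 * u ^ 2) *
        Real.exp (c * β / 2 * w ^ 2 + β * r ^ 2 * √c * u * w) := by
  rw [← Real.exp_add]
  congr 1
  linear_combination (β / 2 * w ^ 2) * Real.sq_sqrt hc

lemma integrable_exp_sq (β r c u : ℝ) (hc : 0 ≤ c) (h : c * β < 1) :
    Integrable (fun w : ℝ => Real.exp (β / 2 * (r ^ 2 * u + √c * w) ^ 2))
      (gaussianReal 0 1) := by
  simp only [exp_sq_split β r c u _ hc]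
  exact (integrable_exp_quadratic_gaussian _ _ (by linarith)).const_mul _

/-- The conditional expectation of `exp((β/2) V²)` given `U = u`, for `V = r² U + √c W`. -/
lemma integral_exp_sq (β r c u : ℝ) (hc : 0 ≤ c) (h : c * β < 1) :
    ∫ w, Real.exp (β / 2 * (r ^ 2 * u + √c * w) ^ 2) ∂(gaussianReal 0 1) =
      (1 - c * β) ^ (-(1 / 2 : ℝ)) *
        Real.exp (r ^ 4 * β / (1 - c * β) / 2 * u ^ 2) := by
  have hd : 1 - β * c ≠ 0 := by linarith
  simp only [exp_sq_split β r c u _ hc]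
  rw [integral_const_mul, integral_exp_quadratic_gaussian _ _ (by linarith),
    show 1 - 2 * (c * β / 2) = 1 - c * β by ring, mul_left_comm, ← Real.exp_add]
  congr 2
  rw [show (β * r ^ 2 * √c * u) ^ 2 = β ^ 2 * r ^ 4 * c * u ^ 2 by
    rw [mul_pow, mul_pow, mul_pow, Real.sq_sqrt hc]; ring, mul_comm c β]
  field_simp
  ring

lemma exp_fiber_eq_prod {L : ℕ} (a r c u : ℝ) (b w : Fin L → ℝ) :
    Real.exp (a * u ^ 2 + ∑ ℓ, (b ℓ / 2) * (r ^ 2 * u + √c * w ℓ) ^ 2) =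
      Real.exp (a * u ^ 2) * ∏ ℓ, Real.exp ((b ℓ / 2) * (r ^ 2 * u + √c * w ℓ) ^ 2) := by
  rw [Real.exp_add, Real.exp_sum]

lemma integrable_fiber {L : ℕ} (a r c u : ℝ) (b : Fin L → ℝ) (hc : 0 ≤ c)
    (h : ∀ ℓ, c * b ℓ < 1) :
    Integrable (fun w : Fin L → ℝ =>
        Real.exp (a * u ^ 2 + ∑ ℓ, (b ℓ / 2) * (r ^ 2 * u + √c * w ℓ) ^ 2))
      (Measure.pi fun _ => gaussianReal 0 1) := by
  simp only [exp_fiber_eq_prod]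
  exact (Integrable.fintype_prod
    (fun ℓ => integrable_exp_sq (b ℓ) r c u hc (h ℓ))).const_mul _

/-- The expectation over all `W_ℓ` given `U = u`. -/
lemma integral_fiber {L : ℕ} (a r c u : ℝ) (b : Fin L → ℝ) (hc : 0 ≤ c)
    (h : ∀ ℓ, c * b ℓ < 1) :
    ∫ w : Fin L → ℝ, Real.exp (a * u ^ 2 + ∑ ℓ, (b ℓ / 2) * (r ^ 2 * u + √c * w ℓ) ^ 2)
        ∂(Measure.pi fun _ => gaussianReal 0 1) =
      (∏ ℓ, (1 - c * b ℓ) ^ (-(1 / 2 : ℝ))) *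
        Real.exp ((a + (∑ ℓ, r ^ 4 * b ℓ / (1 - c * b ℓ)) / 2) * u ^ 2 + 0 * u) := by
  simp only [exp_fiber_eq_prod]
  rw [integral_const_mul, integral_fintype_prod_eq_prod
    (fun ℓ x => Real.exp ((b ℓ / 2) * (r ^ 2 * u + √c * x) ^ 2))]
  simp only [integral_exp_sq _ r c u hc (h _)]
  rw [Finset.prod_mul_distrib, ← Real.exp_sum, mul_left_comm, ← Real.exp_add]
  congr 2
  rw [← Finset.sum_mul, ← Finset.sum_div]
  ring

/-- with `V_ℓ = ρ²U + √(1-ρ⁴)W_ℓ`, under the stated conditions on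
`a, b_1, …, b_L`, the expectation `E[exp(aU² + Σ_ℓ (b_ℓ/2)V_ℓ²)]` is finite and equals
`(1 - 2a - Σ_ℓ ρ⁴b_ℓ/(1-(1-ρ⁴)b_ℓ))^{-1/2} · ∏_ℓ (1-(1-ρ⁴)b_ℓ)^{-1/2}`. -/
theorem gaussian_exponential_moment_formula
    (L : ℕ) (hL : 1 ≤ L) (ρ : ℝ) (hρ : ρ ∈ Set.Ioc (0 : ℝ) 1)
    (a : ℝ) (ha : 0 ≤ a) (b : Fin L → ℝ) (hb : ∀ ℓ, 0 ≤ b ℓ)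
    (hb1 : ∀ ℓ, (1 - ρ ^ 4) * b ℓ < 1)
    (hsum : 2 * a + ∑ ℓ, ρ ^ 4 * b ℓ / (1 - (1 - ρ ^ 4) * b ℓ) < 1) :
    Integrable (fun g : Fin (L + 1) → ℝ => Real.exp
        (a * (g 0) ^ 2 +
          ∑ ℓ : Fin L, (b ℓ / 2) * (ρ ^ 2 * g 0 + Real.sqrt (1 - ρ ^ 4) * g ℓ.succ) ^ 2))
      (gaussSpace L) ∧
    (∫ g, Real.exp
        (a * (g 0) ^ 2 +
          ∑ ℓ : Fin L, (b ℓ / 2) * (ρ ^ 2 * g 0 + Real.sqrt (1 - ρ ^ 4) * g ℓ.succ) ^ 2)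
        ∂(gaussSpace L)) =
      (1 - 2 * a - ∑ ℓ, ρ ^ 4 * b ℓ / (1 - (1 - ρ ^ 4) * b ℓ)) ^ (-(1 / 2 : ℝ)) *
        ∏ ℓ : Fin L, (1 - (1 - ρ ^ 4) * b ℓ) ^ (-(1 / 2 : ℝ)) := by
  have hc : (0 : ℝ) ≤ 1 - ρ ^ 4 := sub_nonneg.2 (pow_le_one₀ hρ.1.le hρ.2)
  set c := 1 - ρ ^ 4
  set S := ∑ ℓ, ρ ^ 4 * b ℓ / (1 - c * b ℓ)
  have hlt : 2 * (a + S / 2) < 1 := by linarith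
  let F : ℝ × (Fin L → ℝ) → ℝ := fun p =>
    Real.exp (a * p.1 ^ 2 + ∑ ℓ, (b ℓ / 2) * (ρ ^ 2 * p.1 + √c * p.2 ℓ) ^ 2)
  have hFm : Continuous F := by fun_prop
  have hFint : Integrable F
      ((gaussianReal 0 1).prod (Measure.pi fun _ : Fin L => gaussianReal 0 1)) := by
    rw [integrable_prod_iff hFm.aestronglyMeasurable]
    refine ⟨ae_of_all _ fun u => integrable_fiber a ρ c u b hc hb1, ?_⟩
    simp only [F, Real.norm_eq_abs, Real.abs_exp, integral_fiber a ρ c _ b hc hb1]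
    exact (integrable_exp_quadratic_gaussian _ _ hlt).const_mul _
  have hmp : MeasurePreserving (MeasurableEquiv.piFinSuccAbove (fun _ : Fin (L + 1) => ℝ) 0)
      (gaussSpace L)
      ((gaussianReal 0 1).prod (Measure.pi fun _ : Fin L => gaussianReal 0 1)) :=
    measurePreserving_piFinSuccAbove (fun _ : Fin (L + 1) => gaussianReal 0 1) 0
  refine ⟨hmp.integrable_comp_of_integrable hFint, ?_⟩
  refine (hmp.integral_comp' F).trans ?_
  rw [integral_prod _ hFint]
  simp only [F, integral_fiber a ρ c _ b hc hb1]
  rw [integral_const_mul, integral_exp_quadratic_gaussian _ _ hlt,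
    show 1 - 2 * (a + S / 2) = 1 - 2 * a - S by ring]
  simp [mul_comm]
end

section
/- For every natural number p ≥ 2 and every real number c, one has ∫_{−1}^{1} exp(c·x)·(1−x²)^{(p−3)/2} dx / ∫_{−1}^{1} (1−x²)^{(p−3)/2} dx ≤ exp(c²/(2p)); that is, the moment generating function of the probability density on [−1,1] proportional to (1−x²)^{(p−3)/2} is at most exp(c²/(2p)). -/
/-!
Write `w(x) = (1 - x²)^a` with `a = (p - 3)/2 > -1` and `M k = ∫_{-1}^{1} x^{2k} w(x) dx`.
Integrating the derivative of `x^{2k+1} (1 - x²)^{a+1}`, which vanishes at both end points, gives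
`(2k + p) M (k+1) = (2k + 1) M k`. Hence `M k ≤ (2k)! / (2^k k! p^k) · M 0`: the even moments are
at most those of a centred Gaussian of variance `1/p`. As `w` is even, the integral of
`exp(c x) w(x)` is that of `cosh(c x) w(x)`; expanding `cosh` termwise and comparing with
the series of `exp(c²/(2p))` gives the bound.
-/

open MeasureTheory

/-- For `a < 0` the weight is unbounded at `±1`; near `1` it is `(1 - x)^a` times a continuous
factor, and evenness gives the other half. -/
lemma weight_intervalIntegrable (a : ℝ) (ha : -1 < a) :
    IntervalIntegrable (fun x : ℝ => (1 - x ^ 2) ^ a) volume (-1) 1 := by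
  have h01 : IntervalIntegrable (fun x : ℝ => (1 - x ^ 2) ^ a) volume 0 1 := by
    have h1 : IntervalIntegrable (fun x : ℝ => (1 - x) ^ a) volume 0 1 := by
      have := (intervalIntegral.intervalIntegrable_rpow' (a := 0) (b := 1) ha).comp_sub_left 1
      simpa using this.symm
    have h2 : ContinuousOn (fun x : ℝ => (1 + x) ^ a) (Set.uIcc 0 1) := by
      rw [Set.uIcc_of_le zero_le_one]
      refine ContinuousOn.rpow_const (by fun_prop) ?_
      intro x hx
      left
      linarith [hx.1]
    refine (h1.mul_continuousOn h2).congr ?_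
    intro x hx
    rw [Set.uIoc_of_le zero_le_one] at hx
    have : (1 : ℝ) - x ^ 2 = (1 - x) * (1 + x) := by ring
    simp only
    rw [this, Real.mul_rpow (by linarith [hx.2]) (by linarith [hx.1])]
  have h10 : IntervalIntegrable (fun x : ℝ => (1 - x ^ 2) ^ a) volume (-1) 0 := by
    have := h01.comp_sub_left 0
    simpa using this.symm
  exact h10.trans h01

lemma pow_mul_weight_intervalIntegrable (a : ℝ) (ha : -1 < a) (n : ℕ) :
    IntervalIntegrable (fun x : ℝ => x ^ n * (1 - x ^ 2) ^ a) volume (-1) 1 :=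
  (weight_intervalIntegrable a ha).continuousOn_mul (by fun_prop)

/-- Integration by parts: both boundary terms of `x^{2k+1} (1 - x²)^{a+1}` vanish. -/
lemma moment_recursion (a : ℝ) (ha : -1 < a) (k : ℕ) :
    (2 * k + (2 * a + 3)) * ∫ x in (-1 : ℝ)..1, x ^ (2 * (k + 1)) * (1 - x ^ 2) ^ a =
      (2 * k + 1) * ∫ x in (-1 : ℝ)..1, x ^ (2 * k) * (1 - x ^ 2) ^ a := by
  have hi := (pow_mul_weight_intervalIntegrable a ha (2 * k)).const_mul (2 * k + 1)
  have hj := (pow_mul_weight_intervalIntegrable a ha (2 * (k + 1))).const_mul (2 * k + (2 * a + 3))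
  have key := intervalIntegral.integral_eq_sub_of_hasDerivAt_of_le
    (f := fun x : ℝ => x ^ (2 * k + 1) * (1 - x ^ 2) ^ (a + 1))
    (f' := fun x : ℝ => (2 * k + 1) * (x ^ (2 * k) * (1 - x ^ 2) ^ a) -
      (2 * k + (2 * a + 3)) * (x ^ (2 * (k + 1)) * (1 - x ^ 2) ^ a))
    (a := -1) (b := 1) (by norm_num)
    (by
      refine ContinuousOn.mul (by fun_prop) (ContinuousOn.rpow_const (by fun_prop) ?_)
      intro x _
      right
      linarith)
    (by
      intro x hx
      have hpos : 0 < 1 - x ^ 2 := by nlinarith [hx.1, hx.2]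
      have hd : HasDerivAt (fun x : ℝ => 1 - x ^ 2) (-(2 * x)) x := by
        simpa using (hasDerivAt_pow 2 x).const_sub 1
      have h := (hasDerivAt_pow (2 * k + 1) x).mul
        (hd.rpow_const (p := a + 1) (Or.inl hpos.ne'))
      refine h.congr_deriv ?_
      rw [add_sub_cancel_right, Real.rpow_add hpos, Real.rpow_one]
      push_cast
      ring)
    (hi.sub hj)
  rw [intervalIntegral.integral_sub hi hj, intervalIntegral.integral_const_mul,
    intervalIntegral.integral_const_mul] at key
  have h0 : (0 : ℝ) ^ (a + 1) = 0 := Real.zero_rpow (by linarith)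
  norm_num [h0] at key
  linarith

lemma moment_nonneg (a : ℝ) (k : ℕ) :
    0 ≤ ∫ x in (-1 : ℝ)..1, x ^ (2 * k) * (1 - x ^ 2) ^ a := by
  refine intervalIntegral.integral_nonneg (by norm_num) ?_
  intro x hx
  have : 0 ≤ 1 - x ^ 2 := by nlinarith [hx.1, hx.2]
  rw [pow_mul]
  positivity

/-- The even moments are dominated by those of a centred Gaussian of variance `1 / q`,
where `q = 2a + 3`. -/
lemma moment_le (a q : ℝ) (ha : -1 < a) (hq : q = 2 * a + 3) (k : ℕ) :
    (∫ x in (-1 : ℝ)..1, x ^ (2 * k) * (1 - x ^ 2) ^ a) ≤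
      (2 * k).factorial / (2 ^ k * k.factorial * q ^ k) *
        ∫ x in (-1 : ℝ)..1, (1 - x ^ 2) ^ a := by
  have hq0 : 0 < q := by linarith
  induction k with
  | zero => simp
  | succ k ih =>
    have hrec := moment_recursion a ha k
    rw [← hq] at hrec
    have hnn := moment_nonneg a (k + 1)
    set A := ∫ x in (-1 : ℝ)..1, x ^ (2 * (k + 1)) * (1 - x ^ 2) ^ a
    set B := ∫ x in (-1 : ℝ)..1, x ^ (2 * k) * (1 - x ^ 2) ^ a
    set C := ∫ x in (-1 : ℝ)..1, (1 - x ^ 2) ^ a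
    have h1 : q * A ≤ (2 * k + 1) * B := by
      have : 0 ≤ 2 * (k : ℝ) * A := by positivity
      linarith
    have h2 : A ≤ (2 * k + 1) / q * B := by
      rw [div_mul_eq_mul_div, le_div_iff₀ hq0]
      linarith
    refine h2.trans ((mul_le_mul_of_nonneg_left ih (by positivity)).trans_eq ?_)
    have e : 2 * (k + 1) = (2 * k + 1) + 1 := by ring
    rw [e, Nat.factorial_succ, Nat.factorial_succ, Nat.factorial_succ k]
    push_cast
    field_simp
    ring

lemma integral_exp_eq_cosh (a : ℝ) (ha : -1 < a) (c : ℝ) :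
    (∫ x in (-1 : ℝ)..1, Real.exp (c * x) * (1 - x ^ 2) ^ a) =
      ∫ x in (-1 : ℝ)..1, Real.cosh (c * x) * (1 - x ^ 2) ^ a := by
  have h1 : IntervalIntegrable (fun x : ℝ => Real.exp (c * x) * (1 - x ^ 2) ^ a) volume (-1) 1 :=
    (weight_intervalIntegrable a ha).continuousOn_mul (by fun_prop)
  have h2 : IntervalIntegrable (fun x : ℝ => Real.exp (-(c * x)) * (1 - x ^ 2) ^ a)
      volume (-1) 1 :=
    (weight_intervalIntegrable a ha).continuousOn_mul (by fun_prop)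
  have h3 : (∫ x in (-1 : ℝ)..1, Real.exp (-(c * x)) * (1 - x ^ 2) ^ a) =
      ∫ x in (-1 : ℝ)..1, Real.exp (c * x) * (1 - x ^ 2) ^ a := by
    have := intervalIntegral.integral_comp_neg (a := -1) (b := 1)
      (fun x : ℝ => Real.exp (c * x) * (1 - x ^ 2) ^ a)
    simpa using this
  have h4 : (fun x : ℝ => Real.cosh (c * x) * (1 - x ^ 2) ^ a) = fun x : ℝ =>
      (1 / 2) * (Real.exp (c * x) * (1 - x ^ 2) ^ a + Real.exp (-(c * x)) * (1 - x ^ 2) ^ a) := by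
    funext x
    rw [Real.cosh_eq]
    ring
  rw [h4, intervalIntegral.integral_const_mul, intervalIntegral.integral_add h1 h2, h3]
  ring

lemma hasSum_integral_cosh (a : ℝ) (ha : -1 < a) (c : ℝ) :
    HasSum (fun k : ℕ => c ^ (2 * k) / (2 * k).factorial *
        ∫ x in (-1 : ℝ)..1, x ^ (2 * k) * (1 - x ^ 2) ^ a)
      (∫ x in (-1 : ℝ)..1, Real.cosh (c * x) * (1 - x ^ 2) ^ a) := by
  have key := intervalIntegral.hasSum_integral_of_dominated_convergence
    (μ := volume) (a := -1) (b := 1)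
    (F := fun (k : ℕ) (x : ℝ) => c ^ (2 * k) / (2 * k).factorial * (x ^ (2 * k) * (1 - x ^ 2) ^ a))
    (f := fun x : ℝ => Real.cosh (c * x) * (1 - x ^ 2) ^ a)
    (fun (k : ℕ) (x : ℝ) => c ^ (2 * k) / (2 * k).factorial * (1 - x ^ 2) ^ a)
    (fun k => by
      have := (pow_mul_weight_intervalIntegrable a ha (2 * k)).const_mul
        (c ^ (2 * k) / (2 * k).factorial)
      exact (intervalIntegrable_iff.mp this).aestronglyMeasurable)
    (fun k => by
      refine Filter.Eventually.of_forall fun x hx => ?_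
      rw [Set.uIoc_of_le (by norm_num)] at hx
      have hx2 : x ^ 2 ≤ 1 := by nlinarith [hx.1, hx.2]
      have hw : 0 ≤ (1 - x ^ 2) ^ a := Real.rpow_nonneg (by linarith) a
      have hp : x ^ (2 * k) ≤ 1 := by
        rw [pow_mul]
        exact pow_le_one₀ (sq_nonneg x) hx2
      have hp0 : 0 ≤ x ^ (2 * k) := by
        rw [pow_mul]
        positivity
      have hc0 : 0 ≤ c ^ (2 * k) / (2 * k).factorial := by
        rw [pow_mul]
        positivity
      rw [Real.norm_of_nonneg (by positivity)]
      exact mul_le_mul_of_nonneg_left (mul_le_of_le_one_left hw hp) hc0)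
    (Filter.Eventually.of_forall fun x _ => ((Real.hasSum_cosh c).summable.mul_right _))
    (by
      have : (fun x : ℝ => ∑' k : ℕ, c ^ (2 * k) / (2 * k).factorial * (1 - x ^ 2) ^ a) =
          fun x : ℝ => Real.cosh c * (1 - x ^ 2) ^ a := by
        funext x
        exact ((Real.hasSum_cosh c).mul_right _).tsum_eq
      rw [this]
      exact (weight_intervalIntegrable a ha).const_mul _)
    (Filter.Eventually.of_forall fun x _ => by
      refine ((Real.hasSum_cosh (c * x)).mul_right ((1 - x ^ 2) ^ a)).congr_fun ?_
      intro k
      rw [mul_pow]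
      ring)
  simpa only [intervalIntegral.integral_const_mul] using key

/-- the moment generating function of the probability density on `[-1,1]`
proportional to `(1-x²)^{(p-3)/2}` is at most `exp(c²/(2p))`. -/
theorem sphere_overlap_mgf_bound (p : ℕ) (hp : 2 ≤ p) (c : ℝ) :
    (∫ x in (-1 : ℝ)..1, Real.exp (c * x) * (1 - x ^ 2) ^ (((p : ℝ) - 3) / 2)) /
        (∫ x in (-1 : ℝ)..1, (1 - x ^ 2) ^ (((p : ℝ) - 3) / 2)) ≤
      Real.exp (c ^ 2 / (2 * p)) := by
  have hp2 : (2 : ℝ) ≤ p := by exact_mod_cast hp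
  have ha : -1 < ((p : ℝ) - 3) / 2 := by linarith
  have hq : (p : ℝ) = 2 * (((p : ℝ) - 3) / 2) + 3 := by ring
  have hM0 := moment_nonneg (((p : ℝ) - 3) / 2) 0
  simp only [mul_zero, pow_zero, one_mul] at hM0
  rw [integral_exp_eq_cosh _ ha]
  refine div_le_of_le_mul₀ hM0 (Real.exp_pos _).le ?_
  have hexp : HasSum (fun k : ℕ => (c ^ 2 / (2 * p)) ^ k / k.factorial)
      (Real.exp (c ^ 2 / (2 * p))) := by
    rw [Real.exp_eq_exp_ℝ]
    exact NormedSpace.expSeries_div_hasSum_exp _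
  refine hasSum_le ?_ (hasSum_integral_cosh _ ha c) (hexp.mul_right _)
  intro k
  have hc0 : 0 ≤ c ^ (2 * k) / (2 * k).factorial := by
    rw [pow_mul]
    positivity
  refine (mul_le_mul_of_nonneg_left (moment_le _ p ha hq k) hc0).trans_eq ?_
  rw [← mul_assoc, div_pow, mul_pow, ← pow_mul]
  congr 1
  field_simp
end
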